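/- Let 0 < d < 1 and let m be a nonnegative integer. Then Σ_{k=0}^∞ [(d)_k (2d-1)_k (1+k)_m] / [(2d)_k (2)_k (2+k)_m] = [Γ(1-d)Γ(2-2d)Γ(2d) / (Γ(3-2d)Γ(d))] · (2-2d)_m/(3-2d)_m + [(1-2d)/(2-2d)] · [Γ(1-d)/Γ(2-d)] · (2-2d)_m (1)_m / ((3-2d)_m (2-d)_m). -/

import Mathlib

open Real MeasureTheory

/-- Pochhammer symbol `(a)_k = a (a+1) ⋯ (a+k-1)` for real `a`. -/
noncomputable def poch (a : ℝ) (k : ℕ) : ℝ := (ascPochhammer ℝ k).eval a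

/-- Gaussian hypergeometric function `₂F₁(a,b;c;z)`. -/
noncomputable def hyp2F1 (a b c z : ℝ) : ℝ :=
  ∑' k : ℕ, (poch a k * poch b k) / poch c k * z ^ k / (Nat.factorial k)

/-- Generalized hypergeometric function `₃F₂(a₁,a₂,a₃;b₁,b₂;z)`. -/
noncomputable def hyp3F2 (a₁ a₂ a₃ b₁ b₂ z : ℝ) : ℝ :=
  ∑' k : ℕ, (poch a₁ k * poch a₂ k * poch a₃ k) / (poch b₁ k * poch b₂ k) * z ^ k /
    (Nat.factorial k)

/-- Generalized hypergeometric function `₄F₃(a₁,a₂,a₃,a₄;b₁,b₂,b₃;z)`. -/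
noncomputable def hyp4F3 (a₁ a₂ a₃ a₄ b₁ b₂ b₃ z : ℝ) : ℝ :=
  ∑' k : ℕ, (poch a₁ k * poch a₂ k * poch a₃ k * poch a₄ k) /
    (poch b₁ k * poch b₂ k * poch b₃ k) * z ^ k / (Nat.factorial k)


lemma poch_zero (a : ℝ) : poch a 0 = 1 := by simp [poch]

lemma poch_succ (a : ℝ) (k : ℕ) : poch a (k + 1) = poch a k * (a + k) := by
  simp [poch, ascPochhammer_succ_eval]

lemma poch_pos (a : ℝ) (ha : 0 < a) (k : ℕ) : 0 < poch a k := ascPochhammer_pos k a ha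

lemma poch_shift (a : ℝ) (k : ℕ) : poch a k * (a + k) = a * poch (a + 1) k := by
  induction k with
  | zero => simp [poch_zero]
  | succ n ih =>
    rw [poch_succ, ih, poch_succ]; push_cast; ring

lemma poch_Gamma (a : ℝ) (ha : 0 < a) (k : ℕ) : Real.Gamma a * poch a k = Real.Gamma (a + k) := by
  induction k with
  | zero => simp [poch_zero]
  | succ n ih =>
    rw [poch_succ, ← mul_assoc, ih]
    push_cast
    rw [← add_assoc, Real.Gamma_add_one (by positivity)]; ring

lemma poch_prod (a : ℝ) (k : ℕ) : ∏ j ∈ Finset.range k, (a + j) = poch a k := by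
  induction k with
  | zero => simp [poch_zero]
  | succ n ih => rw [Finset.prod_range_succ, ih, poch_succ]

/-- coefficients -/
noncomputable def cc (d : ℝ) (k : ℕ) : ℝ := poch d k / (Nat.factorial k)

lemma cc_pos (d : ℝ) (hd : 0 < d) (k : ℕ) : 0 < cc d k :=
  div_pos (poch_pos d hd k) (by positivity)

lemma cc_succ (d : ℝ) (k : ℕ) : cc d (k + 1) * (k + 1) = cc d k * (d + k) := by
  unfold cc
  rw [poch_succ, Nat.factorial_succ]; push_cast
  have : (Nat.factorial k : ℝ) ≠ 0 := by positivity
  field_simp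

open Filter Asymptotics in
lemma cc_bigO (d : ℝ) (hd : 0 < d) :
    (fun n => cc d n) =O[atTop] (fun n : ℕ => (n : ℝ) ^ (d - 1)) := by
  have h1 : Tendsto (fun n => (Real.GammaSeq d n)⁻¹) atTop (nhds (Real.Gamma d)⁻¹) :=
    (Real.GammaSeq_tendsto_Gamma d).inv₀ (Real.Gamma_pos_of_pos hd).ne'
  have h2 := h1.isBigO_one ℝ
  have h3 : (fun n : ℕ => (n : ℝ) ^ d / (d + n)) =O[atTop] (fun n : ℕ => (n : ℝ) ^ (d - 1)) := by
    refine IsBigO.of_bound 1 ?_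
    filter_upwards [eventually_gt_atTop 0] with n hn
    have hn' : (0 : ℝ) < n := by exact_mod_cast hn
    rw [Real.norm_of_nonneg (by positivity), Real.norm_of_nonneg (by positivity), one_mul,
      Real.rpow_sub_one hn'.ne']
    gcongr
    linarith
  have h4 := h3.mul h2
  refine (h4.congr' ?_ ?_)
  · filter_upwards [eventually_gt_atTop 0] with n hn
    have hn' : (0 : ℝ) < n := by exact_mod_cast hn
    rw [Real.GammaSeq, poch_prod, poch_succ, cc]
    have := poch_pos d hd n
    have h5 : (0 : ℝ) < (n : ℝ) ^ d := by positivity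
    have : (Nat.factorial n : ℝ) ≠ 0 := by positivity
    field_simp
  · filter_upwards with n
    simp

open Filter in
lemma cc_tendsto (d : ℝ) (hd : 0 < d) (hd1 : d < 1) : Tendsto (fun n => cc d n) atTop (nhds 0) := by
  refine (cc_bigO d hd).trans_tendsto ?_
  have := (tendsto_rpow_neg_atTop (show 0 < 1 - d by linarith)).comp (tendsto_natCast_atTop_atTop (R := ℝ))
  simpa [Function.comp_def] using this

open Filter Asymptotics in
lemma cc_summable (d : ℝ) (hd : 0 < d) (hd1 : d < 1) (x : ℝ) :
    Summable (fun k : ℕ => cc d k / (k + x)) := by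
  refine summable_of_isBigO_nat (g := fun n : ℕ => (n : ℝ) ^ (d - 2))
    (Real.summable_nat_rpow.2 (by linarith)) ?_
  have h3 : (fun n : ℕ => ((n : ℝ) + x)⁻¹) =O[atTop] (fun n : ℕ => (n : ℝ)⁻¹) := by
    refine IsBigO.of_bound 2 ?_
    filter_upwards [eventually_gt_atTop 0,
      tendsto_natCast_atTop_atTop.eventually (eventually_gt_atTop (2 * |x|))] with n hn hx
    have hn' : (0 : ℝ) < n := by exact_mod_cast hn
    have := neg_abs_le x
    have h2 : (n : ℝ) / 2 ≤ n + x := by linarith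
    have h3 : (0 : ℝ) < n + x := by linarith
    rw [Real.norm_of_nonneg (by positivity), Real.norm_of_nonneg (by positivity)]
    calc ((n : ℝ) + x)⁻¹ ≤ ((n : ℝ) / 2)⁻¹ := by gcongr
      _ = 2 * (n : ℝ)⁻¹ := by field_simp
  refine ((cc_bigO d hd).mul h3).congr' ?_ ?_
  · filter_upwards with n
    rw [div_eq_mul_inv]
  · filter_upwards [eventually_gt_atTop 0] with n hn
    have hn' : (0 : ℝ) < n := by exact_mod_cast hn
    rw [show d - 2 = (d - 1) - 1 by ring, Real.rpow_sub_one hn'.ne' (d - 1), div_eq_mul_inv]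

lemma cc_series (d : ℝ) (t : ℝ) (ht0 : 0 < t) (ht1 : t < 1) :
    HasSum (fun k : ℕ => cc d k * t ^ k) ((1 - t) ^ (-d)) := by
  have h := (Real.one_div_one_sub_rpow_hasFPowerSeriesOnBall_zero d).hasSum (y := t)
    (by simp [← ofReal_norm, abs_of_pos ht0, ht1])
  rw [zero_add, one_div, ← Real.rpow_neg (by linarith)] at h
  convert! h using 2 with k
  rw [FormalMultilinearSeries.ofScalars_apply_eq, smul_eq_mul]
  congr 1
  have h1 := Ring.factorial_nsmul_multichoose_eq_ascPochhammer d k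
  rw [Polynomial.ascPochhammer_smeval_eq_eval, Ring.multichoose_eq, nsmul_eq_mul] at h1
  rw [cc, poch, ← h1]
  have : (Nat.factorial k : ℝ) ≠ 0 := by positivity
  field_simp

lemma beta_real (x d : ℝ) (hx : 0 < x) (hd1 : d < 1) :
    ∫ t in (0:ℝ)..1, t ^ (x - 1) * (1 - t) ^ (-d) =
      Real.Gamma x * Real.Gamma (1 - d) / Real.Gamma (x + (1 - d)) := by
  have h := ProbabilityTheory.beta_eq_betaIntegralReal x (1 - d) hx (by linarith)
  rw [ProbabilityTheory.beta] at h
  rw [h, Complex.betaIntegral]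
  have : ∫ t in (0:ℝ)..1, (t : ℂ) ^ ((x : ℂ) - 1) * (1 - (t : ℂ)) ^ (((1 - d : ℝ) : ℂ) - 1)
      = ∫ t in (0:ℝ)..1, ((t ^ (x - 1) * (1 - t) ^ (-d) : ℝ) : ℂ) := by
    refine intervalIntegral.integral_congr fun t ht => ?_
    rw [Set.uIcc_of_le zero_le_one] at ht
    rw [Complex.ofReal_mul, Complex.ofReal_cpow ht.1, Complex.ofReal_cpow (by linarith [ht.2])]
    push_cast
    congr 2
    ring
  rw [this, intervalIntegral.integral_ofReal, Complex.ofReal_re]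

lemma base (d : ℝ) (hd : 0 < d) (hd1 : d < 1) (x : ℝ) (hx : 0 < x) :
    HasSum (fun k : ℕ => cc d k / (k + x))
      (Real.Gamma x * Real.Gamma (1 - d) / Real.Gamma (x + (1 - d))) := by
  have hint : ∀ k : ℕ, ∫ t in Set.Ioo (0:ℝ) 1, cc d k * t ^ ((k : ℝ) + x - 1) = cc d k / (k + x) := by
    intro k
    rw [← MeasureTheory.integral_Ioc_eq_integral_Ioo, ← intervalIntegral.integral_of_le zero_le_one,
      intervalIntegral.integral_const_mul, integral_rpow (Or.inl (by
        have : (0:ℝ) ≤ k := by positivity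
        linarith))]
    rw [Real.one_rpow, Real.zero_rpow (by simp; positivity)]
    simp [div_eq_mul_inv]
  have hI : ∀ k : ℕ, Integrable (fun t : ℝ => cc d k * t ^ ((k : ℝ) + x - 1))
      (volume.restrict (Set.Ioo (0:ℝ) 1)) := by
    intro k
    refine Integrable.const_mul ?_ _
    refine (intervalIntegral.integrableOn_Ioo_rpow_iff zero_lt_one).2 ?_
    have : (0:ℝ) ≤ k := by positivity
    linarith
  have hn : ∀ k : ℕ, ∫ t in Set.Ioo (0:ℝ) 1, ‖cc d k * t ^ ((k : ℝ) + x - 1)‖ = cc d k / (k + x) := by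
    intro k
    rw [← hint k]
    refine setIntegral_congr_fun measurableSet_Ioo fun t ht => ?_
    have h1 := cc_pos d hd k
    have h2 := ht.1
    exact Real.norm_of_nonneg (by positivity)
  have H := hasSum_integral_of_summable_integral_norm hI (by
    simp_rw [hn]; exact cc_summable d hd hd1 x)
  simp_rw [hint] at H
  convert! H using 1
  rw [← beta_real x d hx hd1, intervalIntegral.integral_of_le zero_le_one,
    MeasureTheory.integral_Ioc_eq_integral_Ioo]
  refine setIntegral_congr_fun measurableSet_Ioo fun t ht => ?_
  have h := (cc_series d t ht.1 ht.2).mul_left (t ^ (x - 1))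
  rw [← h.tsum_eq]
  refine tsum_congr fun k => ?_
  rw [add_sub_assoc, Real.rpow_add ht.1, Real.rpow_natCast]
  ring

open Filter in
lemma shift (d : ℝ) (hd : 0 < d) (hd1 : d < 1) (x : ℝ) (hx : -1 < x)
    (r : ℕ → ℝ) (hr : ∀ k : ℕ, r k = 1 - k / (k + x)) 
    (hs : Summable (fun k => cc d k * r k)) :
    ∑' k, cc d k * r k = (x + 1 - d) * ∑' k : ℕ, cc d k / (k + (x + 1)) := by
  have hs2 := (cc_summable d hd hd1 (x + 1))
  have hs3 := hs.hasSum.sub (hs2.hasSum.mul_left (x + 1 - d))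
  have ht := hs3.tendsto_sum_nat
  have hp : ∀ N : ℕ, ∑ k ∈ Finset.range N, (cc d k * r k - (x + 1 - d) * (cc d k / (k + (x + 1))))
      = cc d N * (N / (N + x)) := by
    intro N
    induction N with
    | zero => simp
    | succ n ih =>
      rw [Finset.sum_range_succ, ih, hr]
      have h := cc_succ d n
      have hn : (n : ℝ) + 1 + x ≠ 0 := by
        have : (0:ℝ) ≤ n := by positivity
        linarith
      have hn2 : (n : ℝ) + (x + 1) ≠ 0 := by
        have : (0:ℝ) ≤ n := by positivity
        linarith
      push_cast
      rw [← mul_div_assoc (cc d (n+1)), h]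
      rw [show (n : ℝ) + (x + 1) = n + 1 + x by ring]
      field_simp
      ring
  simp_rw [hp] at ht
  have h0 : Tendsto (fun N : ℕ => cc d N * ((N : ℝ) / (N + x))) atTop (nhds 0) := by
    have := (cc_tendsto d hd hd1).mul (tendsto_natCast_div_add_atTop x)
    simpa using this
  linarith [tendsto_nhds_unique ht h0]

theorem pochhammer_series_sum (d : ℝ) (hd0 : 0 < d) (hd1 : d < 1) (m : ℕ) :
    (∑' k : ℕ, (poch d k * poch (2 * d - 1) k * poch (1 + k) m) /
        (poch (2 * d) k * poch 2 k * poch (2 + k) m))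
    = Real.Gamma (1 - d) * Real.Gamma (2 - 2 * d) * Real.Gamma (2 * d) /
        (Real.Gamma (3 - 2 * d) * Real.Gamma d) * (poch (2 - 2 * d) m / poch (3 - 2 * d) m)
      + (1 - 2 * d) / (2 - 2 * d) * (Real.Gamma (1 - d) / Real.Gamma (2 - d)) *
          (poch (2 - 2 * d) m * poch 1 m / (poch (3 - 2 * d) m * poch (2 - d) m)) := by
  have hm0 : (0:ℝ) ≤ m := by positivity
  set r : ℕ → ℝ := fun k => poch (2 * d - 1) k / poch (2 * d) k with hrdef
  have hrx : ∀ k : ℕ, r k * (k + (2 * d - 1)) = 2 * d - 1 := by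
    intro k
    have h := poch_shift (2 * d - 1) k
    rw [sub_add_cancel] at h
    have := poch_pos (2 * d) (by linarith) k
    simp only [hrdef]
    field_simp
    linarith
  have hr : ∀ k : ℕ, r k = 1 - k / (k + (2 * d - 1)) := by
    intro k
    rcases Nat.eq_zero_or_pos k with rfl | hk
    · simp [hrdef, poch_zero]
    · have hk' : (1:ℝ) ≤ k := by exact_mod_cast hk
      have : (k:ℝ) + (2 * d - 1) ≠ 0 := by linarith
      field_simp
      linarith [hrx k]
  have hg1 := base d hd0 hd1 (2 * d) (by linarith)
  have hg2 := base d hd0 hd1 (m + 1) (by linarith)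
  have hs : Summable (fun k => cc d k * r k) := by
    rw [← summable_nat_add_iff 1]
    have h1 := ((summable_nat_add_iff 1).2 (cc_summable d hd0 hd1 (2 * d - 1))).mul_left (2 * d - 1)
    refine h1.congr fun k => ?_
    have hk : (0:ℝ) ≤ k := by positivity
    have h3 := hrx (k + 1)
    have h4 : ((k + 1 : ℕ) : ℝ) + (2 * d - 1) ≠ 0 := by push_cast; linarith
    rw [← eq_div_iff h4] at h3
    rw [h3]; ring
  have hsh := shift d hd0 hd1 (2 * d - 1) (by linarith) r hr hs
  rw [sub_add_cancel, hg1.tsum_eq] at hsh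
  have hS := ((hs.hasSum.sub (hg2.mul_left (2 * d - 1))).div_const ((m:ℝ) + 2 - 2 * d)).tsum_eq
  have hterm : ∀ k : ℕ, (poch d k * poch (2 * d - 1) k * poch (1 + k) m) /
        (poch (2 * d) k * poch 2 k * poch (2 + k) m) =
        (cc d k * r k - (2 * d - 1) * (cc d k / (k + (m + 1)))) / ((m:ℝ) + 2 - 2 * d) := by
    intro k
    have e1 := poch_shift (1 + k) m
    have e2 := poch_shift 1 k
    rw [show (1:ℝ) + 1 = 2 by norm_num] at e2
    rw [show (1:ℝ) + k + 1 = 2 + k by ring] at e1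
    have e3 : poch 1 k = Nat.factorial k := by simp [poch]
    have e4 : poch 2 k = Nat.factorial k * (1 + k) := by rw [← e3]; linarith
    have p1 := poch_pos (1 + k) (by positivity) m
    have p2 := poch_pos (2 + k) (by positivity) m
    have p3 := poch_pos (2 * d) (by linarith) k
    have e5 : poch (1 + k) m / poch (2 + k) m = (1 + k) / (1 + k + m) := by
      rw [div_eq_div_iff (by positivity) (by positivity)]; linarith
    have p4 : (Nat.factorial k : ℝ) ≠ 0 := by positivity
    have p5 : (m:ℝ) + 2 - 2 * d ≠ 0 := by linarith
    have p6 : (1:ℝ) + k + m ≠ 0 := by positivity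
    have p7 : (1:ℝ) + k ≠ 0 := by positivity
    have : (poch d k * poch (2 * d - 1) k * poch (1 + k) m) /
        (poch (2 * d) k * poch 2 k * poch (2 + k) m) = cc d k * r k / (1 + k) * (poch (1 + k) m / poch (2 + k) m) := by
      rw [e4, hrdef, cc]; field_simp
    rw [this, e5, show (k:ℝ) + (m + 1) = 1 + k + m by ring]
    have := hrx k
    field_simp
    linear_combination (-cc d k) * this
  rw [tsum_congr hterm, hS, hsh]
  have q1 := poch_shift (2 - 2 * d) m
  rw [show 2 - 2 * d + 1 = 3 - 2 * d by ring] at q1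
  have q2 : Real.Gamma (3 - 2 * d) = (2 - 2 * d) * Real.Gamma (2 - 2 * d) := by
    rw [← Real.Gamma_add_one (by linarith)]; congr 1; ring
  have q3 : poch 1 m = Nat.factorial m := by simp [poch]
  have q4 : Real.Gamma (m + 1 + (1 - d)) = Real.Gamma (2 - d) * poch (2 - d) m := by
    rw [poch_Gamma _ (by linarith)]; congr 1; ring
  have q5 : Real.Gamma (2 * d + (1 - d)) = d * Real.Gamma d := by
    rw [← Real.Gamma_add_one (by linarith)]; congr 1; ring
  have q6 : poch (2 - 2 * d) m / poch (3 - 2 * d) m = (2 - 2 * d) / (m + 2 - 2 * d) := by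
    have := poch_pos (3 - 2 * d) (by linarith) m
    rw [div_eq_div_iff (by positivity) (by linarith)]; linarith
  rw [q2, q3, q4, q5, Real.Gamma_nat_eq_factorial, q6, mul_div_mul_comm (poch (2 - 2 * d) m), q6]
  have z1 := Real.Gamma_pos_of_pos hd0
  have z2 := Real.Gamma_pos_of_pos (show 0 < 2 - d by linarith)
  have z3 := Real.Gamma_pos_of_pos (show 0 < 2 - 2 * d by linarith)
  have z4 := poch_pos (2 - d) (by linarith) m
  have z5 : (m:ℝ) + 2 - 2 * d ≠ 0 := by linarith
  have z6 : 1 - d ≠ 0 := by linarith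
  generalize Real.Gamma (2 - 2 * d) = G1 at *
  generalize Real.Gamma (2 - d) = G2 at *
  generalize Real.Gamma (1 - d) = G3 at *
  generalize Real.Gamma (2 * d) = G4 at *
  rw [show 2 - 2 * d = 2 * (1 - d) by ring]
  field_simp
  ring
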